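/- Let S ⊆ {-1,0,1}^d \ {0} be a step set (with positive weights) that is symmetric over all but the d-th axis and takes a step forwards and backwards in each coordinate. If S has positive drift (B(1) - A(1) > 0), then the total weight s_n of walks of length n taking steps in S, starting at the origin, and never leaving ℕ^d satisfies s_n = S(1)^n · n^{-(d-1)/2} · [ (S(1)/π)^{(d-1)/2} · (B(1) - A(1)) / (B(1) · √(b_1 ··· b_{d-1})) + O(1/n) ] as n → ∞. -/

import Mathlib

open Finset Filter
open scoped Classical

noncomputable section

/-- Total weight of walks of length `n` with steps in `S` (weighted by `w`),
starting at the origin and never leaving `ℕ^d`. -/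
def walkWeight (d : ℕ) (S : Finset (Fin d → ℤ)) (w : (Fin d → ℤ) → ℝ) (n : ℕ) : ℝ :=
  ∑ f : Fin n → {i // i ∈ S},
    if ∀ m : ℕ, m ≤ n → ∀ j : Fin d,
        0 ≤ ∑ k ∈ Finset.univ.filter (fun k : Fin n => (k : ℕ) < m), ((f k : Fin d → ℤ) j)
    then ∏ k : Fin n, w (f k) else 0

/-- The step set `S` (with weights `w`) is symmetric over the `k`-th coordinate axis. -/
def SymmetricAxis (d : ℕ) (S : Finset (Fin d → ℤ)) (w : (Fin d → ℤ) → ℝ) (k : Fin d) : Prop :=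
  ∀ i ∈ S, Function.update i k (-(i k)) ∈ S ∧ w (Function.update i k (-(i k))) = w i

/-!
Since the step set is symmetric over the first `d` axes, the signs of the first `d` coordinates of
the steps may be taken to be independent fair coins. Given how often each of these coordinates moves
(`N_k` times, say), the coordinates perform independent simple random walks, and the `k`-th one
stays in `ℕ` with probability `binom(N_k, ⌊N_k/2⌋) / 2^N_k ≈ √(2 / (π N_k))`. Up to the factor
`S(1)^n`, the weight `s_n` is thus the expectation of the product of these probabilities over the
event that the last coordinate, a random walk with positive drift, stays in `ℕ`. The last walk
survives forever with probability `1 - A(1)/B(1)` (gambler's ruin), `N_k` has mean `2 n b_k / S(1)`,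
and the product is expanded to second order about these means. The linear term contributes only
`O(1/n)`, since the walk of positive drift is almost surely killed early or never, so that killing
it decorrelates from the fluctuations of `N_k`.
-/

section KilledWalk

variable {ι M : Type*} [Add M]

/-- One step of the walk on `M` with steps `s i` of weight `w i`, killed when it leaves `D`.
Position `x` itself is not tested: `(killedStep S w s D ^ n) φ x` is the sum over the `n`-step paths
from `x` whose positions at times `1, …, n` lie in `D` of the weight of the path times the value of
`φ` at its end. -/
def killedStep (S : Finset ι) (w : ι → ℝ) (s : ι → M) (D : Set M) : Module.End ℝ (M → ℝ) where
  toFun φ x := ∑ i ∈ S, w i * D.indicator φ (x + s i)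
  map_add' φ ψ := by
    ext x
    simp only [Set.indicator_add', Pi.add_apply, mul_add, sum_add_distrib]
  map_smul' a φ := by
    ext x
    simp only [Set.indicator_apply, Pi.smul_apply, smul_eq_mul, RingHom.id_apply, mul_sum, mul_ite,
      mul_zero, mul_left_comm]

variable {S : Finset ι} {w : ι → ℝ} {s : ι → M} {D : Set M} {φ ψ χ : M → ℝ} {x : M}

local notation "K" => killedStep S w s D

lemma killedStep_apply (φ : M → ℝ) (x : M) :
    K φ x = ∑ i ∈ S, w i * D.indicator φ (x + s i) := rfl

lemma killedStep_pow_succ_apply (n : ℕ) (φ : M → ℝ) (x : M) :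
    (K ^ (n + 1)) φ x = ∑ i ∈ S, w i * D.indicator ((K ^ n) φ) (x + s i) := by
  rw [pow_succ', Module.End.mul_apply, killedStep_apply]

lemma killedStep_pow_eq_self (h : ∀ x ∈ D, K φ x = φ x) (n : ℕ) (hx : x ∈ D) :
    (K ^ n) φ x = φ x := by
  induction n generalizing x with
  | zero => rfl
  | succ n ih =>
    rw [killedStep_pow_succ_apply, Set.indicator_congr fun y hy => ih hy]
    exact h x hx

lemma killedStep_smul_weight (a : ℝ) :
    killedStep S (fun i => a * w i) s D = a • K := by
  ext φ x
  simp only [LinearMap.smul_apply, Pi.smul_apply, smul_eq_mul, killedStep_apply, mul_sum, mul_assoc]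

lemma killedStep_pow_mono (hw : ∀ i ∈ S, 0 ≤ w i) (h : ∀ x ∈ D, φ x ≤ ψ x) (n : ℕ) (hx : x ∈ D) :
    (K ^ n) φ x ≤ (K ^ n) ψ x := by
  induction n generalizing x with
  | zero => exact h x hx
  | succ n ih =>
    simp only [killedStep_pow_succ_apply]
    refine sum_le_sum fun i hi => mul_le_mul_of_nonneg_left ?_ (hw i hi)
    exact Set.indicator_le_indicator' fun hy => ih hy

lemma killedStep_pow_nonneg (hw : ∀ i ∈ S, 0 ≤ w i) (h : ∀ x ∈ D, 0 ≤ φ x) (n : ℕ) (hx : x ∈ D) :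
    0 ≤ (K ^ n) φ x := by
  simpa using killedStep_pow_mono (φ := 0) (s := s) hw h n hx

lemma killedStep_pow_abs_sub_le (hw : ∀ i ∈ S, 0 ≤ w i) (h : ∀ x ∈ D, |φ x - ψ x| ≤ χ x) (n : ℕ)
    (hx : x ∈ D) : |(K ^ n) φ x - (K ^ n) ψ x| ≤ (K ^ n) χ x := by
  rw [← Pi.sub_apply, ← map_sub, abs_le, ← Pi.neg_apply, ← map_neg]
  exact ⟨killedStep_pow_mono hw (fun y hy => neg_le_of_abs_le (h y hy)) n hx,
    killedStep_pow_mono hw (fun y hy => le_of_abs_le (h y hy)) n hx⟩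

lemma killedStep_pow_le_of_le_mul (hw : ∀ i ∈ S, 0 ≤ w i) {l : ℝ} (hl : 0 ≤ l)
    (h : ∀ x ∈ D, K φ x ≤ l * φ x) (n : ℕ) (hx : x ∈ D) : (K ^ n) φ x ≤ l ^ n * φ x := by
  induction n with
  | zero => simp
  | succ n ih =>
    calc (K ^ (n + 1)) φ x = (K ^ n) (K φ) x := by rw [pow_succ, Module.End.mul_apply]
      _ ≤ (K ^ n) (l • φ) x := killedStep_pow_mono hw h n hx
      _ = l * (K ^ n) φ x := by rw [map_smul, Pi.smul_apply, smul_eq_mul]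
      _ ≤ l ^ (n + 1) * φ x := by
        rw [pow_succ', mul_assoc]
        gcongr

lemma killedStep_le_sum (hw : ∀ i ∈ S, 0 ≤ w i) (h : ∀ x, 0 ≤ φ x) (x : M) :
    K φ x ≤ ∑ i ∈ S, w i * φ (x + s i) :=
  sum_le_sum fun i hi => mul_le_mul_of_nonneg_left
    (Set.indicator_le_self' (fun y _ => h y) _) (hw i hi)

lemma killedStep_pow_one_le_one (hw : ∀ i ∈ S, 0 ≤ w i) (hw1 : ∑ i ∈ S, w i = 1) (n : ℕ)
    (hx : x ∈ D) : (K ^ n) 1 x ≤ 1 := by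
  simpa using killedStep_pow_le_of_le_mul (s := s) (D := D) (φ := 1) hw zero_le_one
    (fun y _ => (killedStep_le_sum hw (fun _ => zero_le_one) y).trans (by simp [hw1])) n hx

lemma killedStep_one_mem_Icc (hw : ∀ i ∈ S, 0 ≤ w i) (hw1 : ∑ i ∈ S, w i = 1) (n : ℕ) (x : M) :
    D.indicator ((K ^ n) 1) x ∈ Set.Icc 0 1 := by
  rw [Set.indicator_apply]
  split_ifs with hx
  · exact ⟨killedStep_pow_nonneg hw (fun _ _ => zero_le_one) n hx,
      killedStep_pow_one_le_one hw hw1 n hx⟩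
  · exact ⟨le_rfl, zero_le_one⟩

end KilledWalk

lemma indicator_killedStep_pow_add {ι M : Type*} [AddCommSemigroup M] {S : Finset ι} {w : ι → ℝ}
    {s : ι → M} {D : Set M} {y : M} (hy : ∀ x, x + y ∈ D ↔ x ∈ D) (φ : M → ℝ) (n : ℕ) (x : M) :
    D.indicator ((killedStep S w s D ^ n) φ) (x + y)
      = D.indicator ((killedStep S w s D ^ n) fun z => φ (z + y)) x := by
  induction n generalizing x with
  | zero => simp only [pow_zero, Module.End.one_apply, Set.indicator_apply, hy]
  | succ n ih =>
    simp only [Set.indicator_apply, hy, killedStep_pow_succ_apply] at ih ⊢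
    simp only [add_right_comm x y, ih, hy]

lemma forall_partial_sum_succ_mem {M : Type*} [AddCommMonoid M] (D : Set M) (n : ℕ)
    (g : Fin (n + 1) → M) (x : M) :
    (∀ m ≤ n + 1, x + ∑ k ∈ univ.filter (fun k : Fin (n + 1) => (k : ℕ) < m), g k ∈ D) ↔
      x ∈ D ∧
        ∀ m ≤ n, x + g 0 + ∑ k ∈ univ.filter (fun k : Fin n => (k : ℕ) < m), g k.succ ∈ D := by
  have tail (m : ℕ) : x + ∑ k ∈ univ.filter (fun k : Fin (n + 1) => (k : ℕ) < m + 1), g k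
      = x + g 0 + ∑ k ∈ univ.filter (fun k : Fin n => (k : ℕ) < m), g k.succ := by
    simp [sum_filter, Fin.sum_univ_succ, add_assoc]
  constructor
  · exact fun h => ⟨by simpa using h 0 (Nat.zero_le _), fun m hm => tail m ▸ h (m + 1) (by omega)⟩
  · rintro ⟨h0, h⟩ (_ | m) hm
    · simpa using h0
    · exact tail m ▸ h m (by omega)

lemma indicator_killedStep_pow_one_eq_sum {ι M : Type*} [AddCommMonoid M] (S : Finset ι)
    (w : ι → ℝ) (s : ι → M) (D : Set M) (n : ℕ) (x : M) :
    D.indicator ((killedStep S w s D ^ n) 1) x = ∑ f : Fin n → {i // i ∈ S},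
      if ∀ m ≤ n, x + ∑ k ∈ univ.filter (fun k : Fin n => (k : ℕ) < m), s (f k) ∈ D
      then ∏ k, w (f k) else 0 := by
  induction n generalizing x with
  | zero => simp [Set.indicator_apply]
  | succ n ih =>
    rw [← (Fin.consEquiv fun _ => {i // i ∈ S}).sum_comp, Fintype.sum_prod_type]
    simp only [Fin.consEquiv_apply, forall_partial_sum_succ_mem, Fin.cons_zero, Fin.cons_succ,
      Fin.prod_univ_succ, Set.indicator_apply (f := (killedStep S w s D ^ (n + 1)) 1),
      killedStep_pow_succ_apply, ih]
    by_cases hx : x ∈ D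
    · simp only [hx, if_true, true_and, mul_sum, mul_ite, mul_zero]
      exact (sum_coe_sort S _).symm
    · simp only [hx, if_false, false_and, sum_const_zero]

lemma walkWeight_eq_killedStep_pow (d : ℕ) (S : Finset (Fin d → ℤ)) (w : (Fin d → ℤ) → ℝ) (n : ℕ) :
    walkWeight d S w n = (killedStep S w id (Set.Ici 0) ^ n) 1 0 := by
  rw [← Set.indicator_of_mem (Set.self_mem_Ici (a := (0 : Fin d → ℤ)))
    ((killedStep S w id (Set.Ici 0) ^ n) 1), indicator_killedStep_pow_one_eq_sum]
  simp only [walkWeight, Set.mem_Ici, Pi.le_def, zero_add, id_eq, Finset.sum_apply, Pi.zero_apply]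

section Counter

variable {ι M : Type*} [AddZeroClass M] {S : Finset ι} {p : ι → ℝ} {s : ι → M} {D : Set M} {x : M}

local notation "K" => killedStep S p s D

lemma killedStep_pow_sq_le (hp : ∀ i ∈ S, 0 ≤ p i) (hp1 : ∑ i ∈ S, p i = 1) {N : M →+ ℝ}
    (hN : ∀ i ∈ S, N (s i) ∈ Set.Icc 0 1) (n : ℕ) (m : ℝ) (hx : x ∈ D) :
    (K ^ n) (fun y => (N y - m) ^ 2) x
      ≤ (N x + n * ∑ i ∈ S, p i * N (s i) - m) ^ 2 + n * ∑ i ∈ S, p i * N (s i) := by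
  set P := ∑ i ∈ S, p i * N (s i)
  have hP0 : 0 ≤ P := sum_nonneg fun i hi => mul_nonneg (hp i hi) (hN i hi).1
  have one_step (m : ℝ) (y : M) : K (fun y => (N y - m) ^ 2) y ≤ (N y - (m - P)) ^ 2 + P :=
    calc K (fun y => (N y - m) ^ 2) y
        ≤ ∑ i ∈ S, p i * (N (y + s i) - m) ^ 2 :=
          killedStep_le_sum hp (fun _ => sq_nonneg _) y
      _ ≤ ∑ i ∈ S, (p i * (N y - m) ^ 2 + (2 * (N y - m) + 1) * (p i * N (s i))) := by
          refine sum_le_sum fun i hi => ?_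
          rw [map_add]
          nlinarith [mul_nonneg (hp i hi) (mul_nonneg (hN i hi).1 (sub_nonneg.2 (hN i hi).2))]
      _ = (N y - m) ^ 2 + (2 * (N y - m) + 1) * P := by
          rw [sum_add_distrib, ← sum_mul, ← mul_sum, hp1, one_mul]
      _ ≤ (N y - (m - P)) ^ 2 + P := by nlinarith [sq_nonneg P]
  induction n generalizing m with
  | zero => simp
  | succ n ih =>
    calc (K ^ (n + 1)) (fun y => (N y - m) ^ 2) x
        = (K ^ n) (K fun y => (N y - m) ^ 2) x := by rw [pow_succ, Module.End.mul_apply]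
      _ ≤ (K ^ n) ((fun y => (N y - (m - P)) ^ 2) + P • 1) x :=
          killedStep_pow_mono hp (fun y _ => by simpa using one_step m y) n hx
      _ = (K ^ n) (fun y => (N y - (m - P)) ^ 2) x + P * (K ^ n) 1 x := by
          rw [map_add, map_smul, Pi.add_apply, Pi.smul_apply, smul_eq_mul]
      _ ≤ (N x + n * P - (m - P)) ^ 2 + n * P + P * 1 := by
          gcongr
          exacts [ih _, killedStep_pow_one_le_one hp hp1 n hx]
      _ = _ := by push_cast; ring

lemma exp_neg_le_one_sub {a : ℝ} (ha : a ∈ Set.Icc 0 1) :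
    Real.exp (-a) ≤ 1 - (1 - Real.exp (-1)) * a := by
  have h := convexOn_exp.2 (Set.mem_univ 0) (Set.mem_univ (-1)) (sub_nonneg.2 ha.2) ha.1 (by ring)
  simp only [smul_eq_mul, mul_zero, mul_neg, mul_one, zero_add, Real.exp_zero] at h
  linarith

lemma killedStep_pow_exp_neg_le (hp : ∀ i ∈ S, 0 ≤ p i) (hp1 : ∑ i ∈ S, p i = 1) {N : M →+ ℝ}
    (hN : ∀ i ∈ S, N (s i) ∈ Set.Icc 0 1) (n : ℕ) (hx : x ∈ D) :
    (K ^ n) (fun y => Real.exp (-N y)) x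
      ≤ Real.exp (-((1 - Real.exp (-1)) * (n * ∑ i ∈ S, p i * N (s i)))) * Real.exp (-N x) := by
  set P := ∑ i ∈ S, p i * N (s i)
  set c := 1 - Real.exp (-1)
  have one_step (y : M) : K (fun y => Real.exp (-N y)) y ≤ Real.exp (-(c * P)) * Real.exp (-N y) :=
    calc K (fun y => Real.exp (-N y)) y
        ≤ ∑ i ∈ S, p i * Real.exp (-N (y + s i)) :=
          killedStep_le_sum hp (fun _ => (Real.exp_pos _).le) y
      _ ≤ ∑ i ∈ S, (p i - c * (p i * N (s i))) * Real.exp (-N y) := by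
          refine sum_le_sum fun i hi => ?_
          calc p i * Real.exp (-N (y + s i))
              = p i * Real.exp (-N (s i)) * Real.exp (-N y) := by
                rw [map_add, neg_add_rev, Real.exp_add, mul_assoc]
            _ ≤ p i * (1 - c * N (s i)) * Real.exp (-N y) := by
                gcongr
                exacts [hp i hi, exp_neg_le_one_sub (hN i hi)]
            _ = _ := by ring
      _ = (1 - c * P) * Real.exp (-N y) := by
          rw [← sum_mul, sum_sub_distrib, ← mul_sum, hp1]
      _ ≤ Real.exp (-(c * P)) * Real.exp (-N y) := by
          gcongr
          exact Real.one_sub_le_exp_neg _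
  refine (killedStep_pow_le_of_le_mul hp (Real.exp_pos _).le (fun y _ => one_step y) n hx).trans_eq
    ?_
  rw [← Real.exp_nat_mul]
  ring_nf

lemma killedStep_pow_succ_counter_sub (hp1 : ∑ i ∈ S, p i = 1) (N : M →+ ℝ) (n : ℕ) (x : M) :
    (K ^ (n + 1)) N x - (N x + (n + 1 : ℕ) * ∑ i ∈ S, p i * N (s i)) * (K ^ (n + 1)) 1 x
      = K (fun y => (K ^ n) N y - (N y + n * ∑ i ∈ S, p i * N (s i)) * (K ^ n) 1 y) x
        + ∑ i ∈ S, p i * ((N (s i) - ∑ i ∈ S, p i * N (s i)) *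
            (D.indicator ((K ^ n) 1) (x + s i) - 1)) := by
  set P := ∑ i ∈ S, p i * N (s i) with hP
  set E : M → ℝ := fun y => (K ^ n) N y - (N y + n * P) * (K ^ n) 1 y with hE
  have centred : ∑ i ∈ S, p i * (N (s i) - P) = 0 := by
    simp only [mul_sub, sum_sub_distrib, ← sum_mul, hp1, one_mul, hP, sub_self]
  have split (y : M) :
      D.indicator ((K ^ n) N) y = D.indicator E y + (N y + n * P) * D.indicator ((K ^ n) 1) y := by
    by_cases hy : y ∈ D <;> simp [hE, hy]
  rw [killedStep_pow_succ_apply, killedStep_pow_succ_apply, killedStep_apply, mul_sum,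
    ← sum_sub_distrib, ← sub_zero (∑ i ∈ S, _), ← centred, ← sum_sub_distrib, ← sum_add_distrib]
  refine sum_congr rfl fun i _ => ?_
  rw [split, map_add]
  push_cast
  ring

lemma abs_sum_counter_mul_indicator_sub_one_le (hp : ∀ i ∈ S, 0 ≤ p i) (hp1 : ∑ i ∈ S, p i = 1)
    {N : M →+ ℝ} (hN : ∀ i ∈ S, N (s i) ∈ Set.Icc 0 1) (n : ℕ) (x : M) :
    |∑ i ∈ S, p i * ((N (s i) - ∑ i ∈ S, p i * N (s i)) *
      (D.indicator ((K ^ n) 1) (x + s i) - 1))| ≤ 1 - (K ^ (n + 1)) 1 x := by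
  set P := ∑ i ∈ S, p i * N (s i)
  have hP0 : 0 ≤ P := sum_nonneg fun i hi => mul_nonneg (hp i hi) (hN i hi).1
  have hP1 : P ≤ 1 := hp1 ▸ sum_le_sum fun i hi => mul_le_of_le_one_right (hp i hi) (hN i hi).2
  set q : M → ℝ := D.indicator ((K ^ n) 1)
  have hq01 (y : M) : 0 ≤ 1 - q y := sub_nonneg.2 (killedStep_one_mem_Icc hp hp1 n y).2
  calc _ ≤ ∑ i ∈ S, (p i - p i * q (x + s i)) := by
        refine (abs_sum_le_sum_abs _ _).trans (sum_le_sum fun i hi => ?_)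
        have hNP : |N (s i) - P| ≤ 1 :=
          (abs_sub_le_of_le_of_le (hN i hi).1 (hN i hi).2 hP0 hP1).trans_eq (sub_zero 1)
        rw [abs_mul, abs_mul, abs_of_nonneg (hp i hi), abs_sub_comm (q _), abs_of_nonneg (hq01 _),
          ← mul_one_sub]
        exact mul_le_mul_of_nonneg_left (mul_le_of_le_one_left (hq01 _) hNP) (hp i hi)
    _ = 1 - (K ^ (n + 1)) 1 x := by rw [sum_sub_distrib, hp1, killedStep_pow_succ_apply]

/-- Conditioning on survival barely changes the mean of a counter. -/
lemma killedStep_pow_counter_sub_le (hp : ∀ i ∈ S, 0 ≤ p i) (hp1 : ∑ i ∈ S, p i = 1) {N : M →+ ℝ}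
    (hN : ∀ i ∈ S, N (s i) ∈ Set.Icc 0 1) {g : M → ℝ} {l : ℝ} (hl : l < 1)
    (hg : ∀ x ∈ D, ∀ n, 1 - (K ^ n) 1 x ≤ g x) (hKg : ∀ x ∈ D, K g x ≤ l * g x) (n : ℕ)
    (hx : x ∈ D) :
    |(K ^ n) N x - (N x + n * ∑ i ∈ S, p i * N (s i)) * (K ^ n) 1 x| ≤ (1 - l)⁻¹ * g x := by
  have hl' : 0 < 1 - l := sub_pos.2 hl
  induction n generalizing x with
  | zero =>
    have hg0 : 0 ≤ g x := by simpa using hg x hx 0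
    simpa using mul_nonneg (inv_nonneg.2 hl'.le) hg0
  | succ n ih =>
    set E : M → ℝ := fun y => (K ^ n) N y - (N y + n * ∑ i ∈ S, p i * N (s i)) * (K ^ n) 1 y
    have inherited : |K E x| ≤ (1 - l)⁻¹ * (l * g x) :=
      calc |K E x| ≤ K ((1 - l)⁻¹ • g) x := by
            simpa using killedStep_pow_abs_sub_le (s := s) (φ := E) (ψ := 0) (χ := (1 - l)⁻¹ • g) hp
              (fun y hy => by simpa using ih hy) 1 hx
        _ ≤ (1 - l)⁻¹ * (l * g x) := by
            rw [map_smul, Pi.smul_apply, smul_eq_mul]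
            gcongr
            exact hKg x hx
    have defect := (abs_sum_counter_mul_indicator_sub_one_le (D := D) hp hp1 hN n x).trans
      (hg x hx (n + 1))
    rw [killedStep_pow_succ_counter_sub hp1]
    calc _ ≤ (1 - l)⁻¹ * (l * g x) + g x := (abs_add_le _ _).trans (add_le_add inherited defect)
      _ = (1 - l)⁻¹ * g x := by field_simp; ring

end Counter

section HalfSpace

variable {ι M : Type*} [AddZeroClass M] {S : Finset ι} {p : ι → ℝ} {s : ι → M} {v : M →+ ℤ}
  {a b : ℝ}

local notation "K" => killedStep S p s (v ⁻¹' Set.Ici 0)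

lemma sum_mul_pow_toNat (hp1 : ∑ i ∈ S, p i = 1)
    (hv : ∀ i ∈ S, v (s i) = -1 ∨ v (s i) = 0 ∨ v (s i) = 1)
    (ha : ∑ i ∈ S with v (s i) = -1, p i = a) (hb : ∑ i ∈ S with v (s i) = 1, p i = b)
    (r : ℝ) {x : M} (hx : 0 ≤ v x) :
    ∑ i ∈ S, p i * r ^ (v (x + s i) + 1).toNat
      = r ^ (v x + 1).toNat + r ^ (v x).toNat * (1 - r) * (a - b * r) := by
  obtain ⟨k, hk⟩ := Int.eq_ofNat_of_zero_le hx
  have term (i : ι) (hi : i ∈ S) : p i * r ^ (v (x + s i) + 1).toNat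
      = r ^ (k + 1) * p i + r ^ k * (1 - r) * (if v (s i) = -1 then p i else 0)
        - r ^ (k + 1) * (1 - r) * (if v (s i) = 1 then p i else 0) := by
    rcases hv i hi with h | h | h
    · rw [show (v (x + s i) + 1).toNat = k by rw [map_add]; omega]
      simp only [h, reduceIte, Int.reduceNeg, Int.reduceEq, mul_zero]; ring
    · rw [show (v (x + s i) + 1).toNat = k + 1 by rw [map_add]; omega]
      simp only [h, reduceIte, Int.reduceNeg, Int.reduceEq, mul_zero]; ring
    · rw [show (v (x + s i) + 1).toNat = k + 2 by rw [map_add]; omega]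
      simp only [h, reduceIte, Int.reduceNeg, Int.reduceEq, mul_zero]; ring
  rw [sum_congr rfl term, sum_sub_distrib, sum_add_distrib, ← mul_sum, ← mul_sum, ← mul_sum, hp1,
    ← sum_filter, ← sum_filter, ha, hb, show (v x + 1).toNat = k + 1 by omega,
    show (v x).toNat = k by omega]
  ring

/-- Gambler's ruin: `1 - (a / b) ^ (v x + 1)` is harmonic, and vanishes where the walk is killed. -/
lemma killedStep_gamblersRuin (hp1 : ∑ i ∈ S, p i = 1)
    (hv : ∀ i ∈ S, v (s i) = -1 ∨ v (s i) = 0 ∨ v (s i) = 1)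
    (ha : ∑ i ∈ S with v (s i) = -1, p i = a) (hb : ∑ i ∈ S with v (s i) = 1, p i = b)
    (hb0 : b ≠ 0) {x : M} (hx : 0 ≤ v x) :
    K (fun y => 1 - (a / b) ^ (v y + 1).toNat) x = 1 - (a / b) ^ (v x + 1).toNat := by
  calc _ = ∑ i ∈ S, p i * (1 - (a / b) ^ (v (x + s i) + 1).toNat) := by
        refine sum_congr rfl fun i hi => ?_
        by_cases hi' : x + s i ∈ v ⁻¹' Set.Ici 0
        · rw [Set.indicator_of_mem hi']
        · have hkill : (v (x + s i) + 1).toNat = 0 := by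
            rw [Set.mem_preimage, Set.mem_Ici, map_add] at hi'
            have := hv i hi
            rw [map_add]; omega
          rw [Set.indicator_of_notMem hi', hkill, pow_zero, sub_self]
    _ = 1 - (a / b) ^ (v x + 1).toNat := by
        simp only [mul_sub, mul_one, sum_sub_distrib, hp1,
          sum_mul_pow_toNat hp1 hv ha hb (a / b) hx, mul_div_cancel₀ a hb0, sub_self, mul_zero,
          add_zero]

lemma killedStep_pow_one_sub_gamblersRuin (hp1 : ∑ i ∈ S, p i = 1)
    (hv : ∀ i ∈ S, v (s i) = -1 ∨ v (s i) = 0 ∨ v (s i) = 1)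
    (ha : ∑ i ∈ S with v (s i) = -1, p i = a) (hb : ∑ i ∈ S with v (s i) = 1, p i = b)
    (hb0 : b ≠ 0) (n : ℕ) {x : M} (hx : 0 ≤ v x) :
    (K ^ n) 1 x - (1 - (a / b) ^ (v x + 1).toNat)
      = (K ^ n) (fun y => (a / b) ^ (v y + 1).toNat) x := by
  rw [← killedStep_pow_eq_self (D := v ⁻¹' Set.Ici 0)
    (fun y hy => killedStep_gamblersRuin hp1 hv ha hb hb0 hy) n hx, ← Pi.sub_apply, ← map_sub]
  simp only [Pi.sub_def, Pi.one_apply, sub_sub_cancel]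

lemma killedStep_pow_toNat_le (hp : ∀ i ∈ S, 0 ≤ p i) (hp1 : ∑ i ∈ S, p i = 1)
    (hv : ∀ i ∈ S, v (s i) = -1 ∨ v (s i) = 0 ∨ v (s i) = 1)
    (ha : ∑ i ∈ S with v (s i) = -1, p i = a) (hb : ∑ i ∈ S with v (s i) = 1, p i = b)
    {r : ℝ} (hr : 0 < r) {x : M} (hx : 0 ≤ v x) :
    K (fun y => r ^ (v y + 1).toNat) x
      ≤ (1 - (1 - r) * (b * r - a) / r) * r ^ (v x + 1).toNat := by
  refine (killedStep_le_sum hp (fun _ => pow_nonneg hr.le _) x).trans_eq ?_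
  rw [sum_mul_pow_toNat hp1 hv ha hb r hx, show (v x + 1).toNat = (v x).toNat + 1 by omega,
    pow_succ]
  field_simp
  ring

/-- The witness `r = (a / b + 1) / 2` lies halfway between the roots of `(1 - r) * (b * r - a)`. -/
lemma exists_contracting_base (ha : 0 ≤ a) (hab : a < b) (hb : b ≤ 1) :
    ∃ r, 0 < r ∧ a / b ≤ r ∧ 1 - (1 - r) * (b * r - a) / r ∈ Set.Ico 0 1 := by
  have hb0 : 0 < b := ha.trans_lt hab
  have hρ0 : 0 ≤ a / b := div_nonneg ha hb0.le
  have hρ1 : a / b < 1 := (div_lt_one hb0).2 hab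
  have hba : 0 < b * ((a / b + 1) / 2) - a := by
    rw [show b * ((a / b + 1) / 2) - a = (b - a) / 2 by field_simp; ring]
    linarith
  have hr : 0 < (a / b + 1) / 2 := by positivity
  refine ⟨(a / b + 1) / 2, hr, by linarith, ?_, ?_⟩
  · rw [sub_nonneg, div_le_one hr]
    calc _ ≤ 1 * (1 * ((a / b + 1) / 2) - 0) := by gcongr; linarith
      _ = (a / b + 1) / 2 := by ring
  · rw [sub_lt_self_iff]
    exact div_pos (mul_pos (by linarith) hba) hr

lemma exists_survival_lyapunov (hp : ∀ i ∈ S, 0 ≤ p i) (hp1 : ∑ i ∈ S, p i = 1)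
    (hv : ∀ i ∈ S, v (s i) = -1 ∨ v (s i) = 0 ∨ v (s i) = 1)
    (ha : ∑ i ∈ S with v (s i) = -1, p i = a) (hb : ∑ i ∈ S with v (s i) = 1, p i = b)
    (hab : a < b) :
    ∃ l ∈ Set.Ico (0 : ℝ) 1, ∃ g : M → ℝ, (∀ x, 0 ≤ v x → K g x ≤ l * g x) ∧
      (∀ x, 0 ≤ v x → ∀ n, 1 - (K ^ n) 1 x ≤ g x) ∧
      ∀ x, 0 ≤ v x → ∀ n, |(K ^ n) 1 x - (1 - (a / b) ^ (v x + 1).toNat)| ≤ l ^ n * g x := by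
  have ha0 : 0 ≤ a := ha ▸ sum_nonneg fun i hi => hp i (mem_filter.1 hi).1
  have hb1 : b ≤ 1 :=
    hb ▸ hp1 ▸ sum_le_sum_of_subset_of_nonneg (filter_subset _ _) fun i hi _ => hp i hi
  have hb0 : 0 < b := ha0.trans_lt hab
  have hρ0 : 0 ≤ a / b := div_nonneg ha0 hb0.le
  obtain ⟨r, hr, hρr, hl⟩ := exists_contracting_base ha0 hab hb1
  have survival (x : M) (hx : 0 ≤ v x) (n : ℕ) :=
    killedStep_pow_one_sub_gamblersRuin hp1 hv ha hb hb0.ne' n hx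
  have decay (x : M) (hx : 0 ≤ v x) := killedStep_pow_toNat_le hp hp1 hv ha hb hr hx
  have ruin_nonneg (x : M) (hx : 0 ≤ v x) (n : ℕ) :
      0 ≤ (K ^ n) (fun y => (a / b) ^ (v y + 1).toNat) x :=
    killedStep_pow_nonneg hp (fun _ _ => pow_nonneg hρ0 _) n hx
  have power_le (x : M) : (a / b) ^ (v x + 1).toNat ≤ r ^ (v x + 1).toNat := by gcongr
  refine ⟨_, hl, fun y => r ^ (v y + 1).toNat, decay, fun x hx n => ?_, fun x hx n => ?_⟩
  · linarith [survival x hx n, ruin_nonneg x hx n, power_le x]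
  · rw [survival x hx n, abs_of_nonneg (ruin_nonneg x hx n)]
    exact (killedStep_pow_mono hp (fun y _ => power_le y) n hx).trans
      (killedStep_pow_le_of_le_mul hp hl.1 decay n hx)

end HalfSpace

section SimpleRandomWalk

/-- The probability that a simple random walk on `ℤ` started at `a` stays nonnegative for `N` steps.
By reflection this is `P(-a - 1 ≤ S_N ≤ a)`, and the `t`-th summand is `P(S_N ∈ {t, -t - 1})`. -/
def survivalProb (N : ℕ) (a : ℤ) : ℝ :=
  (∑ t ∈ range (a + 1).toNat, (N.choose ((N + t + 1) / 2) : ℝ)) / 2 ^ N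

lemma survivalProb_nonneg (N : ℕ) (a : ℤ) : 0 ≤ survivalProb N a := by
  unfold survivalProb
  positivity

lemma survivalProb_of_neg (N : ℕ) {a : ℤ} (ha : a < 0) : survivalProb N a = 0 := by
  rw [survivalProb, Int.toNat_of_nonpos (by omega), sum_range_zero, zero_div]

lemma survivalProb_zero_left {a : ℤ} (ha : 0 ≤ a) : survivalProb 0 a = 1 := by
  obtain ⟨k, rfl⟩ := Int.eq_ofNat_of_zero_le ha
  rw [survivalProb, show ((k : ℤ) + 1).toNat = k + 1 by omega, sum_range_succ']
  have vanish (t : ℕ) : Nat.choose 0 ((0 + (t + 1) + 1) / 2) = 0 :=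
    Nat.choose_eq_zero_of_lt (by omega)
  simp only [vanish, Nat.cast_zero, sum_const_zero]
  norm_num

lemma sum_choose_half_succ (N k : ℕ) :
    ∑ t ∈ range (k + 1), (N + 1).choose ((N + 1 + t + 1) / 2)
      = ∑ t ∈ range (k + 2), N.choose ((N + t + 1) / 2)
        + ∑ t ∈ range k, N.choose ((N + t + 1) / 2) := by
  induction k with
  | zero =>
    rw [zero_add, sum_range_one, sum_range_succ, sum_range_one, sum_range_zero, add_zero,
      show (N + 1 + 0 + 1) / 2 = N / 2 + 1 by omega, Nat.choose_succ_succ,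
      Nat.choose_symm_of_eq_add (show N = (N + 0 + 1) / 2 + N / 2 by omega), add_zero]
  | succ k ih =>
    rw [sum_range_succ, ih, sum_range_succ _ (k + 2), sum_range_succ _ k,
      show (N + 1 + (k + 1) + 1) / 2 = (N + k + 1) / 2 + 1 by omega, Nat.choose_succ_succ,
      show (N + (k + 2) + 1) / 2 = (N + k + 1) / 2 + 1 by omega]
    ring

lemma two_mul_survivalProb_succ (N : ℕ) {a : ℤ} (ha : 0 ≤ a) :
    2 * survivalProb (N + 1) a = survivalProb N (a + 1) + survivalProb N (a - 1) := by
  obtain ⟨k, rfl⟩ := Int.eq_ofNat_of_zero_le ha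
  simp only [survivalProb, show ((k : ℤ) + 1).toNat = k + 1 by omega,
    show ((k : ℤ) + 1 + 1).toNat = k + 2 by omega, show ((k : ℤ) - 1 + 1).toNat = k by omega,
    ← Nat.cast_sum, sum_choose_half_succ]
  push_cast
  field_simp
  ring

lemma survivalProb_add_add_survivalProb_sub (N : ℕ) {a e : ℤ} (ha : 0 ≤ a)
    (he : e = -1 ∨ e = 0 ∨ e = 1) :
    survivalProb N (a + e) + survivalProb N (a - e) = 2 * survivalProb (N + e.natAbs) a := by
  rcases he with rfl | rfl | rfl
  · simpa [add_comm, sub_eq_add_neg] using (two_mul_survivalProb_succ N ha).symm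
  · simp [two_mul]
  · simpa using (two_mul_survivalProb_succ N ha).symm

lemma survivalProb_zero_right (N : ℕ) :
    survivalProb N 0 = ((N + 1) / 2).centralBinom / 4 ^ ((N + 1) / 2) := by
  rw [survivalProb, show ((0 : ℤ) + 1).toNat = 1 from rfl, sum_range_one, add_zero,
    Nat.centralBinom_eq_two_mul_choose]
  obtain ⟨k, rfl | rfl⟩ := N.even_or_odd'
  · rw [show (2 * k + 1) / 2 = k by omega, pow_mul]
    norm_num
  · have pascal : (2 * k + 2).choose (k + 1) = 2 * (2 * k + 1).choose (k + 1) := by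
      rw [Nat.choose_succ_succ, ← Nat.choose_symm_half]
      exact (two_mul _).symm
    rw [show (2 * k + 1 + 1) / 2 = k + 1 by omega, mul_add_one, pascal,
      show (4 : ℝ) = 2 ^ 2 by norm_num, ← pow_mul]
    push_cast
    field_simp
    ring

lemma survivalProb_zero_right_le_one (N : ℕ) : survivalProb N 0 ≤ 1 := by
  rw [survivalProb, show ((0 : ℤ) + 1).toNat = 1 from rfl, sum_range_one]
  exact div_le_one_of_le₀ (mod_cast Nat.choose_le_two_pow _ _) (by positivity)

lemma wallis_mul_sq_centralBinom (k : ℕ) :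
    (k.centralBinom / 4 ^ k : ℝ) ^ 2 * (Real.Wallis.W k * (2 * k + 1)) = 1 := by
  have hfac : ((2 * k).factorial : ℝ) = k.centralBinom * k.factorial ^ 2 := by
    have := Nat.choose_mul_factorial_mul_factorial (show k ≤ 2 * k by omega)
    rw [show 2 * k - k = k by omega, ← Nat.centralBinom_eq_two_mul_choose] at this
    rw [← this]
    push_cast
    ring
  have hbinom : (k.centralBinom : ℝ) ≠ 0 := mod_cast Nat.centralBinom_ne_zero k
  rw [Real.Wallis.W_eq_factorial_ratio, hfac, pow_mul]
  norm_num
  field_simp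
  rw [← pow_mul, mul_comm k 2, pow_mul]
  norm_num

lemma sq_survivalProb_zero_right_bounds {N : ℕ} (hN : N ≠ 0) :
    1 - 2 / (N : ℝ) ≤ survivalProb N 0 ^ 2 * (Real.pi * N / 2) ∧
      survivalProb N 0 ^ 2 * (Real.pi * N / 2) ≤ 1 := by
  have hN0 : (0 : ℝ) < N := by positivity
  have hπ := Real.pi_pos
  rw [survivalProb_zero_right]
  set k := (N + 1) / 2
  have hk_ge : (2 * k : ℝ) ≤ N + 1 := by norm_cast; omega
  have hk_le : (N : ℝ) ≤ 2 * k := by norm_cast; omega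
  have hW := wallis_mul_sq_centralBinom k
  have hW0 := Real.Wallis.W_pos k
  set W := Real.Wallis.W k
  rw [eq_one_div_of_mul_eq_one_left hW]
  have lower : W * (2 * k + 1) ≤ Real.pi / 2 * (N + 2) :=
    mul_le_mul (Real.Wallis.W_le k) (by linarith) (by positivity) (by positivity)
  have upper : Real.pi * N / 2 ≤ W * (2 * k + 1) :=
    calc Real.pi * N / 2 ≤ (2 * k + 1) / (2 * k + 2) * (Real.pi / 2) * (2 * k + 1) := by
          field_simp
          nlinarith
      _ ≤ W * (2 * k + 1) := by
          gcongr
          exact Real.Wallis.le_W k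
  rw [one_div_mul_eq_div]
  refine ⟨?_, div_le_one_of_le₀ upper (by positivity)⟩
  calc 1 - 2 / (N : ℝ) ≤ Real.pi * N / 2 / (Real.pi / 2 * (N + 2)) := by
        field_simp
        nlinarith
    _ ≤ _ := by gcongr

end SimpleRandomWalk

section Symmetrization

lemma sum_mul_piecewise_neg {D : ℕ} {S : Finset (Fin D → ℤ)} {w : (Fin D → ℤ) → ℝ}
    {T : Finset (Fin D)} (hsym : ∀ k ∈ T, SymmetricAxis D S w k) (G : (Fin D → ℤ) → ℝ) :
    ∑ i ∈ S, w i * G (T.piecewise (-i) i) = ∑ i ∈ S, w i * G i := by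
  have single {k : Fin D} (hk : SymmetricAxis D S w k) (G : (Fin D → ℤ) → ℝ) :
      ∑ i ∈ S, w i * G (Function.update i k (-(i k))) = ∑ i ∈ S, w i * G i :=
    sum_nbij' (fun i => Function.update i k (-(i k))) (fun i => Function.update i k (-(i k)))
      (fun i hi => (hk i hi).1) (fun i hi => (hk i hi).1) (by simp) (by simp)
      (fun i hi => by rw [(hk i hi).2])
  induction T using Finset.induction_on with
  | empty => simp
  | insert k T hk ih =>
    rw [← ih fun j hj => hsym j (mem_insert_of_mem hj),
      ← single (hsym k (mem_insert_self k T)) fun i => G (T.piecewise (-i) i)]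
    refine sum_congr rfl fun i _ => congrArg (fun j => w i * G j) ?_
    ext j
    by_cases hj : j = k
    · subst hj
      simp [hk]
    · simp [Finset.piecewise, hj]

variable {d : ℕ} {S : Finset (Fin (d + 1) → ℤ)} {w : (Fin (d + 1) → ℤ) → ℝ}

lemma two_pow_mul_sum_mul_map_prod {R : Type*} [CommSemiring R]
    (hsym : ∀ k : Fin d, SymmetricAxis (d + 1) S w k.castSucc) (f : Fin d → ℤ → R)
    (L : ℤ → R →+ ℝ) :
    2 ^ d * ∑ i ∈ S, w i * L (i (Fin.last d)) (∏ k : Fin d, f k (i k.castSucc))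
      = ∑ i ∈ S, w i * L (i (Fin.last d))
          (∏ k : Fin d, (f k (-(i k.castSucc)) + f k (i k.castSucc))) := by
  have flip (T : Finset (Fin d)) := sum_mul_piecewise_neg (S := S) (w := w)
    (T := T.map Fin.castSuccEmb) (by simpa using fun k _ => hsym k)
    fun i => L (i (Fin.last d)) (∏ k : Fin d, f k (i k.castSucc))
  calc _ = ∑ T : Finset (Fin d), ∑ i ∈ S, w i * L (i (Fin.last d))
          ((∏ k ∈ T, f k (-(i k.castSucc))) * ∏ k ∈ Tᶜ, f k (i k.castSucc)) := by
        have flipped_prod (T : Finset (Fin d)) (i : Fin (d + 1) → ℤ) :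
            ∏ k : Fin d, f k ((T.map Fin.castSuccEmb).piecewise (-i) i k.castSucc)
              = (∏ k ∈ T, f k (-(i k.castSucc))) * ∏ k ∈ Tᶜ, f k (i k.castSucc) := by
          rw [← prod_mul_prod_compl T]
          congr 1 <;> refine prod_congr rfl fun k hk => ?_
          · rw [piecewise_eq_of_mem _ _ _ (by simpa using hk), Pi.neg_apply]
          · rw [piecewise_eq_of_notMem _ _ _ (by simpa using hk)]
        have last_notMem (T : Finset (Fin d)) : Fin.last d ∉ T.map Fin.castSuccEmb := by simp
        simp only [flipped_prod, piecewise_eq_of_notMem _ _ _ (last_notMem _)] at flip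
        simp only [flip, sum_const, nsmul_eq_mul, card_univ, Fintype.card_finset, Fintype.card_fin]
        norm_cast
    _ = _ := by
        simp only [Fintype.prod_add, map_sum, mul_sum]
        exact sum_comm

lemma prod_survivalProb_sub_add_add (N : Fin d → ℕ) {a e : Fin d → ℤ} (ha : ∀ k, 0 ≤ a k)
    (he : ∀ k, e k = -1 ∨ e k = 0 ∨ e k = 1) :
    ∏ k, (survivalProb (N k) (a k - e k) + survivalProb (N k) (a k + e k))
      = 2 ^ d * ∏ k, survivalProb (N k + (e k).natAbs) (a k) := by
  simp only [add_comm (survivalProb _ (_ - _)),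
    survivalProb_add_add_survivalProb_sub _ (ha _) (he _), prod_mul_distrib, prod_const,
    card_univ, Fintype.card_fin]

/-- The step `i` with the signs of its first `d` coordinates forgotten. -/
def foldedStep {d : ℕ} (i : Fin (d + 1) → ℤ) : (Fin d → ℕ) × ℤ :=
  (fun k => (i k.castSucc).natAbs, i (Fin.last d))

local notation "H" => AddMonoidHom.snd (Fin d → ℕ) ℤ ⁻¹' Set.Ici 0

lemma folded_killedStep_eq_zero_of_notMem (n : ℕ) {x : Fin (d + 1) → ℤ} (hx : x ∉ Set.Ici 0) :
    Set.indicator H ((killedStep S w foldedStep H ^ n)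
      (fun y => ∏ k : Fin d, survivalProb (y.1 k) (x k.castSucc))) (0, x (Fin.last d)) = 0 := by
  obtain ⟨j, hj⟩ : ∃ j, x j < 0 := by simpa [Pi.le_def] using hx
  induction j using Fin.lastCases with
  | last => exact Set.indicator_of_notMem (by simpa using hj) _
  | cast k =>
    have vanish : (fun y : (Fin d → ℕ) × ℤ => ∏ k : Fin d, survivalProb (y.1 k) (x k.castSucc))
        = 0 := funext fun y => prod_eq_zero (mem_univ k) (survivalProb_of_neg _ hj)
    rw [vanish, map_zero, Set.indicator_zero', Pi.zero_apply]

lemma folded_killedStep_pow_succ (hstep : ∀ i ∈ S, ∀ j, i j = -1 ∨ i j = 0 ∨ i j = 1)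
    (hsym : ∀ k : Fin d, SymmetricAxis (d + 1) S w k.castSucc) (n : ℕ) {x : Fin (d + 1) → ℤ}
    (hx : 0 ≤ x) :
    (killedStep S w foldedStep H ^ (n + 1))
        (fun y => ∏ k : Fin d, survivalProb (y.1 k) (x k.castSucc)) (0, x (Fin.last d))
      = ∑ i ∈ S, w i * Set.indicator H ((killedStep S w foldedStep H ^ n)
          (fun y => ∏ k : Fin d, survivalProb (y.1 k) ((x + i) k.castSucc)))
          (0, (x + i) (Fin.last d)) := by
  set F := fun y : (Fin d → ℕ) × ℤ => ∏ k : Fin d, survivalProb (y.1 k) (x k.castSucc)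
  let f (k : Fin d) (e : ℤ) (y : (Fin d → ℕ) × ℤ) : ℝ := survivalProb (y.1 k) (x k.castSucc + e)
  let L (e : ℤ) : ((Fin d → ℕ) × ℤ → ℝ) →+ ℝ :=
    (Pi.evalAddMonoidHom _ (0, x (Fin.last d) + e)).comp
      ((Set.indicatorHom ℝ H).comp (killedStep S w foldedStep H ^ n).toAddMonoidHom)
  have hL (e : ℤ) (φ) : Set.indicator H ((killedStep S w foldedStep H ^ n) φ)
      (0, x (Fin.last d) + e) = L e φ := rfl
  have prod_f (i : Fin (d + 1) → ℤ) :
      (fun y : (Fin d → ℕ) × ℤ => ∏ k : Fin d, survivalProb (y.1 k) ((x + i) k.castSucc))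
        = ∏ k : Fin d, f k (i k.castSucc) := by
    ext y
    rw [Finset.prod_apply]
    rfl
  have average {i : Fin (d + 1) → ℤ} (hi : i ∈ S) :
      ∏ k : Fin d, (f k (-(i k.castSucc)) + f k (i k.castSucc))
        = 2 ^ d • fun y => F (y + (fun k => (i k.castSucc).natAbs, 0)) := by
    ext y
    simpa [f, F, sub_eq_add_neg] using prod_survivalProb_sub_add_add y.1
      (fun k : Fin d => hx k.castSucc) fun k => hstep i hi k.castSucc
  rw [← mul_right_inj' (pow_ne_zero d (two_ne_zero (α := ℝ)))]
  simp only [Pi.add_apply (x) _ (Fin.last d), prod_f, hL]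
  rw [two_pow_mul_sum_mul_map_prod hsym, killedStep_pow_succ_apply, mul_sum]
  refine sum_congr rfl fun i hi => ?_
  have hshift := indicator_killedStep_pow_add (S := S) (w := w) (s := foldedStep) (D := H)
    (y := (fun k : Fin d => (i k.castSucc).natAbs, 0)) (by simp) F n
    (0, x (Fin.last d) + i (Fin.last d))
  rw [average hi, map_nsmul, ← hL, ← hshift, nsmul_eq_mul, mul_left_comm]
  simp [foldedStep]

lemma indicator_killedStep_pow_one_eq_folded (hstep : ∀ i ∈ S, ∀ j, i j = -1 ∨ i j = 0 ∨ i j = 1)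
    (hsym : ∀ k : Fin d, SymmetricAxis (d + 1) S w k.castSucc) (n : ℕ) (x : Fin (d + 1) → ℤ) :
    (Set.Ici 0).indicator ((killedStep S w id (Set.Ici 0) ^ n) 1) x
      = Set.indicator H ((killedStep S w foldedStep H ^ n)
          (fun y => ∏ k : Fin d, survivalProb (y.1 k) (x k.castSucc))) (0, x (Fin.last d)) := by
  induction n generalizing x with
  | zero =>
    by_cases hx : x ∈ Set.Ici 0
    · have hlast : ((0 : Fin d → ℕ), x (Fin.last d)) ∈ H := hx (Fin.last d)
      rw [Set.indicator_of_mem hx, Set.indicator_of_mem hlast]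
      exact (prod_eq_one fun (k : Fin d) (_ : k ∈ univ) =>
        survivalProb_zero_left (hx k.castSucc)).symm
    · rw [Set.indicator_of_notMem hx, folded_killedStep_eq_zero_of_notMem 0 hx]
  | succ n ih =>
    by_cases hx : x ∈ Set.Ici 0
    · have hlast : ((0 : Fin d → ℕ), x (Fin.last d)) ∈ H := hx (Fin.last d)
      rw [Set.indicator_of_mem hx, Set.indicator_of_mem hlast, killedStep_pow_succ_apply,
        folded_killedStep_pow_succ hstep hsym n hx]
      simp only [id_eq, ih]
    · rw [Set.indicator_of_notMem hx, folded_killedStep_eq_zero_of_notMem _ hx]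

end Symmetrization

section ProductExpansion

lemma exists_abs_prod_sub_one_sub_sum_le {ι : Type*} (s : Finset ι) (M : ℝ) :
    ∃ C, 0 ≤ C ∧ ∀ u : ι → ℝ, (∀ k ∈ s, |u k| ≤ M) →
      (∏ k ∈ s, u k - 1) ^ 2 ≤ C * ∑ k ∈ s, (u k - 1) ^ 2 ∧
        |∏ k ∈ s, u k - 1 - ∑ k ∈ s, (u k - 1)| ≤ C * ∑ k ∈ s, (u k - 1) ^ 2 := by
  induction s using Finset.induction_on with
  | empty => exact ⟨0, le_rfl, by simp⟩
  | insert a s ha ih =>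
    obtain ⟨C, hC, h⟩ := ih
    refine ⟨C * (2 * M ^ 2 + 2) + 2, by positivity, fun u hu => ?_⟩
    obtain ⟨hsq, hlin⟩ := h u fun k hk => hu k (mem_insert_of_mem hk)
    have hM : u a ^ 2 ≤ M ^ 2 := sq_le_sq' (abs_le.1 (hu a (mem_insert_self a s))).1
      (abs_le.1 (hu a (mem_insert_self a s))).2
    rw [prod_insert ha, sum_insert ha, sum_insert ha]
    set X := ∏ k ∈ s, u k
    set E := ∑ k ∈ s, (u k - 1) ^ 2
    have hE : 0 ≤ E := sum_nonneg fun k _ => sq_nonneg _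
    have : 0 ≤ C * E := mul_nonneg hC hE
    have hCMa : 0 ≤ C * (2 * M ^ 2 + 2) * (u a - 1) ^ 2 := by positivity
    have hMCE : 0 ≤ M ^ 2 * (C * E) := by positivity
    constructor
    · calc (u a * X - 1) ^ 2 ≤ 2 * (u a ^ 2 * (X - 1) ^ 2) + 2 * (u a - 1) ^ 2 := by
            nlinarith [sq_nonneg (u a * (X - 1) - (u a - 1))]
        _ ≤ 2 * (M ^ 2 * (C * E)) + 2 * (u a - 1) ^ 2 := by gcongr
        _ ≤ _ := by nlinarith
    · calc |u a * X - 1 - (u a - 1 + ∑ k ∈ s, (u k - 1))|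
          = |(X - 1 - ∑ k ∈ s, (u k - 1)) + (u a - 1) * (X - 1)| := by ring_nf
        _ ≤ C * E + ((u a - 1) ^ 2 + (X - 1) ^ 2) / 2 := by
            refine (abs_add_le _ _).trans (add_le_add hlin ?_)
            rw [abs_le]
            constructor <;> nlinarith [sq_nonneg (u a - 1 + (X - 1)), sq_nonneg (u a - 1 - (X - 1))]
        _ ≤ _ := by nlinarith

lemma abs_inv_sqrt_sub_one_add_half_le {x : ℝ} (hx : 1 / 2 ≤ x) :
    |(√x)⁻¹ - 1 + (x - 1) / 2| ≤ (x - 1) ^ 2 := by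
  obtain ⟨r, hr, rfl⟩ : ∃ r, 0 < r ∧ x = r ^ 2 :=
    ⟨√x, Real.sqrt_pos.2 (by linarith), (Real.sq_sqrt (by linarith)).symm⟩
  have hr7 : 7 / 10 ≤ r := by nlinarith
  rw [Real.sqrt_sq hr.le, show r⁻¹ - 1 + (r ^ 2 - 1) / 2 = (r - 1) ^ 2 * ((r + 2) / (2 * r)) by
    field_simp; ring, abs_of_nonneg (by positivity),
    show (r ^ 2 - 1) ^ 2 = (r - 1) ^ 2 * (r + 1) ^ 2 by ring]
  gcongr
  rw [div_le_iff₀ (by positivity)]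
  nlinarith

lemma abs_inv_sqrt_sub_one_le {x : ℝ} (hx : 1 / 2 ≤ x) : |(√x)⁻¹ - 1| ≤ |x - 1| := by
  obtain ⟨r, hr, rfl⟩ : ∃ r, 0 < r ∧ x = r ^ 2 :=
    ⟨√x, Real.sqrt_pos.2 (by linarith), (Real.sq_sqrt (by linarith)).symm⟩
  have hr7 : 7 / 10 ≤ r := by nlinarith
  rw [Real.sqrt_sq hr.le, show r⁻¹ - 1 = -((r - 1) * (1 / r)) by field_simp; ring, abs_neg, abs_mul,
    show r ^ 2 - 1 = (r - 1) * (r + 1) by ring, abs_mul, abs_of_pos (one_div_pos.2 hr),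
    abs_of_pos (show 0 < r + 1 by positivity)]
  gcongr
  rw [div_le_iff₀ hr]
  nlinarith

lemma mul_inv_sqrt_expansion {r x η : ℝ} (hr0 : 0 ≤ r) (hr1 : r ≤ 1) (hη : 1 - r ≤ 4 * η)
    (hx : 1 / 2 ≤ x) :
    |r * (√x)⁻¹| ≤ 2 ∧ (r * (√x)⁻¹ - 1) ^ 2 ≤ 18 * (η + (x - 1) ^ 2) ∧
      |r * (√x)⁻¹ - 1 + (x - 1) / 2| ≤ 6 * (η + (x - 1) ^ 2) := by
  have first := abs_inv_sqrt_sub_one_add_half_le hx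
  have zeroth := sq_le_sq.2 (abs_inv_sqrt_sub_one_le hx)
  have hv : (√x)⁻¹ ≤ 3 / 2 := by
    rw [inv_le_comm₀ (Real.sqrt_pos.2 (by linarith)) (by norm_num)]
    exact Real.le_sqrt_of_sq_le (by linarith)
  have hv0 : 0 ≤ (√x)⁻¹ := by positivity
  set v := (√x)⁻¹
  have hloss : (1 - r) * v ≤ 6 * η := by nlinarith
  have hloss0 : 0 ≤ (1 - r) * v := mul_nonneg (by linarith) hv0
  refine ⟨?_, ?_, ?_⟩
  · rw [abs_of_nonneg (mul_nonneg hr0 hv0)]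
    nlinarith
  · have : (1 - r) * v ≤ 3 / 2 := by nlinarith
    nlinarith [sq_nonneg (v - 1 + (1 - r) * v)]
  · rw [show r * v - 1 + (x - 1) / 2 = (v - 1 + (x - 1) / 2) - (1 - r) * v by ring]
    rw [abs_le] at first ⊢
    constructor <;> nlinarith

lemma survivalProb_zero_right_mul_sqrt_bounds {N : ℕ} (hN : N ≠ 0) :
    1 - 2 / (N : ℝ) ≤ survivalProb N 0 * √(Real.pi * N / 2) ∧
      survivalProb N 0 * √(Real.pi * N / 2) ≤ 1 := by
  have hsq : (survivalProb N 0 * √(Real.pi * N / 2)) ^ 2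
      = survivalProb N 0 ^ 2 * (Real.pi * N / 2) := by
    rw [mul_pow, Real.sq_sqrt (by positivity)]
  have h0 : 0 ≤ survivalProb N 0 * √(Real.pi * N / 2) :=
    mul_nonneg (survivalProb_nonneg N 0) (Real.sqrt_nonneg _)
  obtain ⟨lower, upper⟩ := sq_survivalProb_zero_right_bounds hN
  rw [← hsq] at lower upper
  have hle : survivalProb N 0 * √(Real.pi * N / 2) ≤ 1 := (sq_le_one_iff₀ h0).1 upper
  exact ⟨lower.trans (pow_le_of_le_one h0 hle two_ne_zero), hle⟩

lemma survivalProb_mul_sqrt_expansion {c : ℕ} {y : ℝ} (hy : 0 < y) (hc : y / 2 ≤ c) :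
    |survivalProb c 0 * √(Real.pi * y / 2)| ≤ 2 ∧
      (survivalProb c 0 * √(Real.pi * y / 2) - 1) ^ 2 ≤ 18 * (1 / y + ((c - y) / y) ^ 2) ∧
      |survivalProb c 0 * √(Real.pi * y / 2) - 1 + (c - y) / (2 * y)|
        ≤ 6 * (1 / y + ((c - y) / y) ^ 2) := by
  have hc0 : (0 : ℝ) < c := by linarith
  obtain ⟨lower, upper⟩ := survivalProb_zero_right_mul_sqrt_bounds (Nat.cast_pos.1 hc0).ne'
  have hinv : 2 / (c : ℝ) ≤ 4 * (1 / y) := by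
    rw [mul_one_div, div_le_div_iff₀ hc0 hy]
    linarith
  have rescale : survivalProb c 0 * √(Real.pi * y / 2)
      = survivalProb c 0 * √(Real.pi * c / 2) * (√(c / y))⁻¹ := by
    rw [mul_assoc, ← Real.sqrt_inv, ← Real.sqrt_mul (by positivity)]
    congr 2
    field_simp
  rw [rescale, show (c - y) / (2 * y) = (c / y - 1) / 2 by field_simp,
    show (c - y) / y = c / y - 1 by field_simp]
  refine mul_inv_sqrt_expansion (mul_nonneg (survivalProb_nonneg c 0) (Real.sqrt_nonneg _)) upper
    (by linarith) ?_
  rw [le_div_iff₀ hy]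
  linarith

lemma exists_prod_survivalProb_expansion_of_half_le (κ : Type*) [Fintype κ] :
    ∃ C, 0 ≤ C ∧ ∀ (c : κ → ℕ) (y : κ → ℝ), (∀ k, 0 < y k) → (∀ k, y k / 2 ≤ c k) →
      |(∏ k, √(Real.pi * y k / 2)) * ∏ k, survivalProb (c k) 0
          - (1 - ∑ k, (c k - y k) / (2 * y k))|
        ≤ C * ∑ k, (1 / y k + ((c k - y k) / y k) ^ 2) := by
  obtain ⟨C, hC, h⟩ := exists_abs_prod_sub_one_sub_sum_le (univ : Finset κ) 2
  refine ⟨18 * C + 6, by positivity, fun c y hy hc => ?_⟩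
  have factor (k : κ) := survivalProb_mul_sqrt_expansion (hy k) (hc k)
  rw [mul_comm, ← prod_mul_distrib]
  set u := fun k : κ => survivalProb (c k) 0 * √(Real.pi * y k / 2)
  set E := ∑ k, (1 / y k + ((c k - y k) / y k) ^ 2) with hE
  have quadratic : ∑ k, (u k - 1) ^ 2 ≤ 18 * E := by
    rw [hE, mul_sum]
    exact sum_le_sum fun k _ => (factor k).2.1
  have linear : |∑ k, (u k - 1) + ∑ k, (c k - y k) / (2 * y k)| ≤ 6 * E := by
    rw [← sum_add_distrib, hE, mul_sum]
    exact (abs_sum_le_sum_abs _ _).trans (sum_le_sum fun k _ => (factor k).2.2)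
  calc |∏ k, u k - (1 - ∑ k, (c k - y k) / (2 * y k))|
      = |(∏ k, u k - 1 - ∑ k, (u k - 1)) + (∑ k, (u k - 1) + ∑ k, (c k - y k) / (2 * y k))| := by
        ring_nf
    _ ≤ C * (18 * E) + 6 * E := (abs_add_le _ _).trans <| add_le_add
        ((h u fun k _ => (factor k).1).2.trans (mul_le_mul_of_nonneg_left quadratic hC)) linear
    _ = (18 * C + 6) * E := by ring

lemma one_add_sum_abs_le_of_lt_half {κ : Type*} [Fintype κ] {c y : κ → ℝ} (hy : ∀ k, 0 < y k)
    {j : κ} (hj : c j < y j / 2) :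
    1 + ∑ k, |(c k - y k) / (2 * y k)|
      ≤ (Fintype.card κ + 5) * ∑ k, (1 / y k + ((c k - y k) / y k) ^ 2) := by
  set E := ∑ k, (1 / y k + ((c k - y k) / y k) ^ 2)
  have hterm (k : κ) : 0 ≤ 1 / y k := (one_div_pos.2 (hy k)).le
  have bad : 1 / 4 ≤ E := by
    have hdev : (c j - y j) / y j ≤ -(1 / 2) := by
      rw [div_le_iff₀ (hy j)]
      linarith
    calc (1 / 4 : ℝ) ≤ 1 / y j + ((c j - y j) / y j) ^ 2 := by nlinarith [hterm j]
      _ ≤ E := single_le_sum (f := fun k => 1 / y k + ((c k - y k) / y k) ^ 2)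
        (fun k _ => add_nonneg (hterm k) (sq_nonneg _)) (mem_univ j)
  have each (k : κ) : |(c k - y k) / (2 * y k)|
      ≤ 1 / 4 + (1 / y k + ((c k - y k) / y k) ^ 2) := by
    rw [mul_comm, ← div_div, abs_le]
    constructor <;> nlinarith [hterm k, sq_nonneg ((c k - y k) / y k - 1 / 2),
      sq_nonneg ((c k - y k) / y k + 1 / 2)]
  have total : ∑ k, |(c k - y k) / (2 * y k)| ≤ Fintype.card κ * (1 / 4) + E := by
    refine (sum_le_sum fun k _ => each k).trans_eq ?_
    rw [sum_add_distrib, sum_const, card_univ, nsmul_eq_mul]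
  nlinarith [(Nat.cast_nonneg (Fintype.card κ) : (0 : ℝ) ≤ _)]

lemma exists_prod_survivalProb_expansion (κ : Type*) [Fintype κ] :
    ∃ C, 0 ≤ C ∧ ∀ (c : κ → ℕ) (y : κ → ℝ), (∀ k, 0 < y k) →
      |(∏ k, √(Real.pi * y k / 2)) * ∏ k, survivalProb (c k) 0
          - (1 - ∑ k, (c k - y k) / (2 * y k))|
        ≤ C * ∑ k, (1 / y k + ((c k - y k) / y k) ^ 2)
          + (∏ k, √(Real.pi * y k / 2)) * ∑ k, Real.exp (y k / 2 - c k) := by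
  obtain ⟨C, hC, h⟩ := exists_prod_survivalProb_expansion_of_half_le κ
  refine ⟨C + (Fintype.card κ + 5), by positivity, fun c y hy => ?_⟩
  set Y := ∏ k, √(Real.pi * y k / 2)
  set E := ∑ k, (1 / y k + ((c k - y k) / y k) ^ 2)
  have hY : 0 ≤ Y := prod_nonneg fun k _ => Real.sqrt_nonneg _
  have hE0 : 0 ≤ E := sum_nonneg fun k _ => add_nonneg (one_div_pos.2 (hy k)).le (sq_nonneg _)
  have hexp : 0 ≤ ∑ k, Real.exp (y k / 2 - c k) := sum_nonneg fun k _ => (Real.exp_pos _).le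
  rw [add_mul]
  by_cases hc : ∀ k, y k / 2 ≤ c k
  · have := h c y hy hc
    have : 0 ≤ ((Fintype.card κ : ℝ) + 5) * E := by positivity
    have := mul_nonneg hY hexp
    linarith
  · push Not at hc
    obtain ⟨j, hj⟩ := hc
    have hprod : |Y * ∏ k, survivalProb (c k) 0| ≤ Y * ∑ k, Real.exp (y k / 2 - c k) := by
      rw [abs_of_nonneg (mul_nonneg hY (prod_nonneg fun k _ => survivalProb_nonneg _ _))]
      gcongr
      calc ∏ k, survivalProb (c k) 0 ≤ 1 := prod_le_one (fun k _ => survivalProb_nonneg _ _)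
            fun k _ => survivalProb_zero_right_le_one _
        _ ≤ Real.exp (y j / 2 - c j) := Real.one_le_exp (by linarith)
        _ ≤ _ := single_le_sum (f := fun k => Real.exp (y k / 2 - c k))
          (fun k _ => (Real.exp_pos _).le) (mem_univ j)
    have hlin : |1 - ∑ k, (c k - y k) / (2 * y k)| ≤ (Fintype.card κ + 5) * E :=
      calc _ ≤ |(1 : ℝ)| + |∑ k, (c k - y k) / (2 * y k)| := abs_sub _ _
        _ ≤ 1 + ∑ k, |(c k - y k) / (2 * y k)| := by
          rw [abs_one]
          exact add_le_add_right (abs_sum_le_sum_abs _ _) _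
        _ ≤ _ := one_add_sum_abs_le_of_lt_half hy hj
    refine (abs_sub _ _).trans ((add_le_add hprod hlin).trans ?_)
    nlinarith [mul_nonneg hC hE0]

end ProductExpansion

section Asymptotics

variable {ι κ M : Type*} [Fintype κ] [AddZeroClass M] {S : Finset ι} {p : ι → ℝ} {s : ι → M}
  {D : Set M}

lemma abs_killedStep_pow_linear_sub_le (hp : ∀ i ∈ S, 0 ≤ p i) (hp1 : ∑ i ∈ S, p i = 1)
    {N : κ → M →+ ℝ} (hN : ∀ k, ∀ i ∈ S, N k (s i) ∈ Set.Icc 0 1) {g : M → ℝ} {l : ℝ} (hl : l < 1)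
    (hg : ∀ x ∈ D, ∀ n, 1 - (killedStep S p s D ^ n) 1 x ≤ g x)
    (hKg : ∀ x ∈ D, killedStep S p s D g x ≤ l * g x) (h0 : 0 ∈ D) {n : ℕ} {y : κ → ℝ}
    (hy : ∀ k, y k = n * ∑ i ∈ S, p i * N k (s i)) (hy0 : ∀ k, 0 < y k) :
    |(killedStep S p s D ^ n) (1 - ∑ k, (2 * y k)⁻¹ • (⇑(N k) - y k • 1)) 0
        - (killedStep S p s D ^ n) 1 0| ≤ ∑ k, (2 * y k)⁻¹ * ((1 - l)⁻¹ * g 0) := by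
  rw [map_sub, Pi.sub_apply, sub_sub_cancel_left, abs_neg, map_sum, Finset.sum_apply]
  refine (abs_sum_le_sum_abs _ _).trans (sum_le_sum fun k _ => ?_)
  have decorrelation := killedStep_pow_counter_sub_le hp hp1 (hN k) hl hg hKg n h0
  rw [map_zero, zero_add, ← hy] at decorrelation
  rw [map_smul, Pi.smul_apply, smul_eq_mul, abs_mul,
    abs_of_pos (inv_pos.2 (mul_pos two_pos (hy0 k))), map_sub, map_smul]
  exact mul_le_mul_of_nonneg_left decorrelation (inv_pos.2 (mul_pos two_pos (hy0 k))).le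

lemma killedStep_pow_error_le (hp : ∀ i ∈ S, 0 ≤ p i) (hp1 : ∑ i ∈ S, p i = 1)
    {N : κ → M →+ ℝ} (hN : ∀ k, ∀ i ∈ S, N k (s i) ∈ Set.Icc 0 1) (h0 : 0 ∈ D) {n : ℕ} {y : κ → ℝ}
    (hy : ∀ k, y k = n * ∑ i ∈ S, p i * N k (s i)) (hy0 : ∀ k, 0 < y k) {C Y : ℝ} (hC : 0 ≤ C)
    (hY : 0 ≤ Y) :
    (killedStep S p s D ^ n) (∑ k, (C • ((y k)⁻¹ • 1 + (y k ^ 2)⁻¹ • fun x => (N k x - y k) ^ 2)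
        + (Y * Real.exp (y k / 2)) • fun x => Real.exp (-N k x))) 0
      ≤ ∑ k, (C * (2 * (y k)⁻¹) + Y * Real.exp (-((1 / 2 - Real.exp (-1)) * y k))) := by
  rw [map_sum, Finset.sum_apply]
  refine sum_le_sum fun k _ => ?_
  have survival := killedStep_pow_one_le_one hp hp1 n h0 (s := s)
  have variance := killedStep_pow_sq_le hp hp1 (hN k) n (y k) h0
  have deviation := killedStep_pow_exp_neg_le hp hp1 (hN k) n h0
  rw [map_zero, zero_add, ← hy, sub_self, zero_pow two_ne_zero, zero_add] at variance
  rw [map_zero, neg_zero, Real.exp_zero, mul_one, ← hy] at deviation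
  have hinv : 0 ≤ (y k)⁻¹ := (inv_pos.2 (hy0 k)).le
  simp only [map_add, map_smul, Pi.add_apply, Pi.smul_apply, smul_eq_mul]
  refine add_le_add (mul_le_mul_of_nonneg_left ?_ hC) ?_
  · calc _ ≤ (y k)⁻¹ * 1 + (y k ^ 2)⁻¹ * y k := by gcongr
      _ = 2 * (y k)⁻¹ := by
        field_simp [(hy0 k).ne']
        norm_num
  · calc _ ≤ Y * Real.exp (y k / 2) * Real.exp (-((1 - Real.exp (-1)) * y k)) := by gcongr
      _ = Y * Real.exp (-((1 / 2 - Real.exp (-1)) * y k)) := by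
        rw [mul_assoc, ← Real.exp_add]
        ring_nf

lemma exists_abs_mul_killedStep_pow_prod_survivalProb_sub_le (hp : ∀ i ∈ S, 0 ≤ p i)
    (hp1 : ∑ i ∈ S, p i = 1) {c : κ → M →+ ℕ} (hc : ∀ k, ∀ i ∈ S, c k (s i) ≤ 1)
    {g : M → ℝ} {l : ℝ} (hl : l < 1)
    (hg : ∀ x ∈ D, ∀ n, 1 - (killedStep S p s D ^ n) 1 x ≤ g x)
    (hKg : ∀ x ∈ D, killedStep S p s D g x ≤ l * g x) (h0 : 0 ∈ D) :
    ∃ C, ∀ (n : ℕ) (y : κ → ℝ), (∀ k, y k = n * ∑ i ∈ S, p i * (c k (s i) : ℝ)) →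
      (∀ k, 0 < y k) →
      |(∏ k, √(Real.pi * y k / 2)) *
            (killedStep S p s D ^ n) (fun x => ∏ k, survivalProb (c k x) 0) 0
          - (killedStep S p s D ^ n) 1 0|
        ≤ ∑ k, (C * (y k)⁻¹ + (∏ k, √(Real.pi * y k / 2)) *
            Real.exp (-((1 / 2 - Real.exp (-1)) * y k))) := by
  obtain ⟨C, hC, expansion⟩ := exists_prod_survivalProb_expansion κ
  refine ⟨(1 - l)⁻¹ * g 0 / 2 + 2 * C, fun n y hy hy0 => ?_⟩
  set Y := ∏ k, √(Real.pi * y k / 2)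
  have hY : 0 ≤ Y := prod_nonneg fun k _ => Real.sqrt_nonneg _
  let N (k : κ) : M →+ ℝ := (Nat.castAddMonoidHom ℝ).comp (c k)
  have hN (k : κ) (i : ι) (hi : i ∈ S) : N k (s i) ∈ Set.Icc 0 1 :=
    ⟨Nat.cast_nonneg _, Nat.cast_le_one.2 (hc k i hi)⟩
  have pointwise (x : M) (_ : x ∈ D) :
      |(Y • fun x => ∏ k, survivalProb (c k x) 0) x
          - (1 - ∑ k, (2 * y k)⁻¹ • (⇑(N k) - y k • 1) : M → ℝ) x|
        ≤ (∑ k, (C • ((y k)⁻¹ • 1 + (y k ^ 2)⁻¹ • fun x => (N k x - y k) ^ 2)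
            + (Y * Real.exp (y k / 2)) • fun x => Real.exp (-N k x)) : M → ℝ) x := by
    convert expansion (fun k => c k x) y hy0 using 1
    · simp [N, Y, div_eq_inv_mul]
    · rw [mul_sum, mul_sum, ← sum_add_distrib, Finset.sum_apply]
      refine sum_congr rfl fun k _ => ?_
      simp only [AddMonoidHom.coe_comp, Nat.coe_castAddMonoidHom, Function.comp_apply, N,
        Pi.add_apply, Pi.smul_apply, Pi.one_apply, smul_eq_mul, sub_eq_add_neg (y k / 2),
        Real.exp_add, div_pow]
      ring
  have average := killedStep_pow_abs_sub_le hp pointwise n h0 (s := s)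
  have linear := abs_killedStep_pow_linear_sub_le hp hp1 hN hl hg hKg h0 hy hy0
  have error := killedStep_pow_error_le hp hp1 hN h0 hy hy0 hC hY
  rw [map_smul, Pi.smul_apply, smul_eq_mul] at average
  refine (abs_sub_le _ _ _).trans ((add_le_add (average.trans error) linear).trans_eq ?_)
  rw [← sum_add_distrib]
  refine sum_congr rfl fun k _ => ?_
  rw [mul_inv]
  ring


lemma sqrt_pow_mul_exp_neg_isBigO (m : ℕ) {γ : ℝ} (hγ : 0 < γ) :
    (fun n : ℕ => √(n : ℝ) ^ m * Real.exp (-γ * n)) =O[atTop] fun n : ℕ => (n : ℝ)⁻¹ := by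
  refine ((Asymptotics.isBigO_refl (fun n : ℕ => √(n : ℝ) ^ m) atTop).mul
    ((isLittleO_exp_neg_mul_rpow_atTop hγ (-(m / 2 : ℝ) - 1)).comp_tendsto
      tendsto_natCast_atTop_atTop).isBigO).congr' .rfl ?_
  filter_upwards [eventually_gt_atTop 0] with n hn
  have hn0 : (0 : ℝ) < n := Nat.cast_pos.2 hn
  rw [Real.sqrt_eq_rpow, ← Real.rpow_natCast, ← Real.rpow_mul hn0.le, Function.comp_apply,
    ← Real.rpow_add hn0, ← Real.rpow_neg_one]
  ring_nf

lemma prod_sqrt_mul_exp_neg_isBigO {P : κ → ℝ} {γ : ℝ} (hγ : 0 < γ) :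
    (fun n : ℕ => (∏ k, √(Real.pi * (n * P k) / 2)) * Real.exp (-γ * n))
      =O[atTop] fun n : ℕ => (n : ℝ)⁻¹ := by
  refine ((sqrt_pow_mul_exp_neg_isBigO (Fintype.card κ) hγ).const_mul_left
    (∏ k, √(Real.pi * P k / 2))).congr_left fun n => ?_
  have factor (k : κ) : √(Real.pi * (n * P k) / 2) = √(n : ℝ) * √(Real.pi * P k / 2) := by
    rw [← Real.sqrt_mul n.cast_nonneg]
    ring_nf
  simp only [factor, prod_mul_distrib, prod_const, card_univ]
  ring

lemma pow_isBigO_inv {l : ℝ} (hl : l ∈ Set.Ico 0 1) :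
    (fun n : ℕ => l ^ n) =O[atTop] fun n : ℕ => (n : ℝ)⁻¹ := by
  refine (Asymptotics.isLittleO_of_tendsto' ?_ ?_).isBigO
  · filter_upwards [eventually_ne_atTop 0] with n hn h
    exact absurd h (inv_ne_zero (Nat.cast_ne_zero.2 hn))
  · simpa only [div_inv_eq_mul, mul_comm] using
      tendsto_self_mul_const_pow_of_lt_one hl.1 hl.2

lemma exp_neg_one_lt_half : Real.exp (-1) < 1 / 2 := by
  rw [Real.exp_neg, one_div]
  exact inv_strictAnti₀ two_pos (by linarith [Real.exp_one_gt_d9])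

end Asymptotics

section HalfSpaceAsymptotics

variable {ι κ M : Type*} [Fintype κ] [AddZeroClass M] {S : Finset ι} {p : ι → ℝ} {s : ι → M}
  {v : M →+ ℤ} {a b : ℝ}

local notation "K" => killedStep S p s (v ⁻¹' Set.Ici 0)

lemma mul_killedStep_pow_prod_survivalProb_sub_isBigO (hp : ∀ i ∈ S, 0 ≤ p i)
    (hp1 : ∑ i ∈ S, p i = 1) {c : κ → M →+ ℕ} (hc : ∀ k, ∀ i ∈ S, c k (s i) ≤ 1)
    {P : κ → ℝ} (hP : ∀ k, ∑ i ∈ S, p i * (c k (s i) : ℝ) = P k) (hP0 : ∀ k, 0 < P k)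
    (hv : ∀ i ∈ S, v (s i) = -1 ∨ v (s i) = 0 ∨ v (s i) = 1)
    (ha : ∑ i ∈ S with v (s i) = -1, p i = a) (hb : ∑ i ∈ S with v (s i) = 1, p i = b)
    (hab : a < b) :
    (fun n : ℕ => (∏ k, √(Real.pi * (n * P k) / 2)) *
        (K ^ n) (fun x => ∏ k, survivalProb (c k x) 0) 0 - (1 - a / b))
      =O[atTop] fun n : ℕ => (n : ℝ)⁻¹ := by
  obtain ⟨l, hl, g, hKg, hg, hlim⟩ := exists_survival_lyapunov hp hp1 hv ha hb hab
  have h0 : (0 : M) ∈ v ⁻¹' Set.Ici 0 := by simp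
  obtain ⟨C, hC⟩ :=
    exists_abs_mul_killedStep_pow_prod_survivalProb_sub_le (D := v ⁻¹' Set.Ici 0) hp hp1 hc hl.2
      hg hKg h0
  have lateral : (fun n : ℕ => (∏ k, √(Real.pi * (n * P k) / 2)) *
      (K ^ n) (fun x => ∏ k, survivalProb (c k x) 0) 0 - (K ^ n) 1 0)
      =O[atTop] fun n : ℕ => (n : ℝ)⁻¹ := by
    refine .trans (.of_bound' ?_) (Asymptotics.IsBigO.sum (s := univ) fun k _ =>
      ((Asymptotics.isBigO_refl (fun n : ℕ => (n : ℝ)⁻¹) atTop).const_mul_left (C * (P k)⁻¹)).add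
        (prod_sqrt_mul_exp_neg_isBigO (P := P)
          (mul_pos (sub_pos.2 exp_neg_one_lt_half) (hP0 k))))
    filter_upwards [eventually_gt_atTop 0] with n hn
    refine (hC n (fun k => n * P k) (fun k => by rw [hP])
      fun k => mul_pos (Nat.cast_pos.2 hn) (hP0 k)).trans ((le_abs_self _).trans_eq ?_)
    rw [Finset.sum_apply]
    refine congrArg abs (sum_congr rfl fun k _ => ?_)
    rw [mul_inv, mul_assoc C, mul_comm (n : ℝ)⁻¹, neg_mul, mul_assoc, mul_comm (P k) n]
  have survival : (fun n : ℕ => (K ^ n) 1 0 - (1 - a / b)) =O[atTop] fun n : ℕ => (n : ℝ)⁻¹ :=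
    .trans (.of_bound (g 0) (.of_forall fun n => by
      simpa [abs_of_nonneg hl.1, mul_comm] using hlim 0 (map_zero v).ge n)) (pow_isBigO_inv hl)
  simpa only [sub_add_sub_cancel] using lateral.add survival

end HalfSpaceAsymptotics

section MostlySymmetric

lemma rpow_half_eq_sqrt_pow {x : ℝ} (hx : 0 ≤ x) (d : ℕ) : x ^ ((d : ℝ) / 2) = √x ^ d := by
  rw [Real.sqrt_eq_rpow, ← Real.rpow_natCast, ← Real.rpow_mul hx, one_div, inv_mul_eq_div]

lemma inv_prod_sqrt_eq {d : ℕ} {x W : ℝ} (hx : 0 ≤ x) (hW : 0 ≤ W) {b : Fin d → ℝ}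
    (hb : ∀ k, 0 ≤ b k) :
    (∏ k, √(Real.pi * (x * (2 * b k / W)) / 2))⁻¹
      = x ^ (-(d : ℝ) / 2) * ((W / Real.pi) ^ ((d : ℝ) / 2) / √(∏ k, b k)) := by
  have factor (k : Fin d) :
      √(Real.pi * (x * (2 * b k / W)) / 2) = √x * √(b k) / √(W / Real.pi) := by
    rw [← Real.sqrt_mul hx, ← Real.sqrt_div (mul_nonneg hx (hb k)), div_div_eq_mul_div]
    ring_nf
  rw [neg_div, Real.rpow_neg hx, rpow_half_eq_sqrt_pow hx,
    rpow_half_eq_sqrt_pow (div_nonneg hW Real.pi_pos.le), Real.sqrt_prod _ fun k _ => hb k]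
  simp only [factor, prod_div_distrib, prod_mul_distrib, prod_const, card_univ, Fintype.card_fin]
  rw [inv_div, mul_comm (√x ^ d), div_mul_eq_div_div, div_eq_inv_mul]

lemma sum_mul_natAbs {D : ℕ} {S : Finset (Fin D → ℤ)} {w : (Fin D → ℤ) → ℝ} {k : Fin D}
    (hstep : ∀ i ∈ S, i k = -1 ∨ i k = 0 ∨ i k = 1) (hsym : SymmetricAxis D S w k) :
    ∑ i ∈ S, w i * ((i k).natAbs : ℝ) = 2 * ∑ i ∈ S with i k = 1, w i := by
  have reflect := sum_mul_piecewise_neg (T := {k}) (by simpa using hsym)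
    fun i => if i k = 1 then (1 : ℝ) else 0
  calc _ = ∑ i ∈ S, (w i * (if i k = 1 then 1 else 0)
        + w i * if ({k} : Finset (Fin D)).piecewise (-i) i k = 1 then 1 else 0) :=
      sum_congr rfl fun i hi => by rcases hstep i hi with h | h | h <;> simp [h]
    _ = _ := by
      rw [sum_add_distrib, reflect, ← two_mul, sum_filter]
      simp only [mul_ite, mul_one, mul_zero]

variable {d : ℕ} {S : Finset (Fin (d + 1) → ℤ)} {w : (Fin (d + 1) → ℤ) → ℝ}

lemma walkWeight_eq_folded_killedStep_pow
    (hstep : ∀ i ∈ S, ∀ j, i j = -1 ∨ i j = 0 ∨ i j = 1)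
    (hsym : ∀ k : Fin d, SymmetricAxis (d + 1) S w k.castSucc) (n : ℕ) :
    walkWeight (d + 1) S w n
      = (killedStep S w foldedStep (AddMonoidHom.snd (Fin d → ℕ) ℤ ⁻¹' Set.Ici 0) ^ n)
          (fun y => ∏ k : Fin d, survivalProb (y.1 k) 0) 0 := by
  have fold := indicator_killedStep_pow_one_eq_folded hstep hsym n 0
  rw [Set.indicator_of_mem (Set.mem_Ici.2 le_rfl), ← walkWeight_eq_killedStep_pow,
    Set.indicator_of_mem (by simp)] at fold
  exact fold

lemma mul_walkWeight_div_pow_sub_isBigO {W A B : ℝ} {b : Fin d → ℝ}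
    (hstep : ∀ i ∈ S, ∀ j, i j = -1 ∨ i j = 0 ∨ i j = 1) (hw : ∀ i ∈ S, 0 ≤ w i)
    (hsym : ∀ k : Fin d, SymmetricAxis (d + 1) S w k.castSucc) (hW : ∑ i ∈ S, w i = W)
    (hW0 : 0 < W) (hb : ∀ k : Fin d, ∑ i ∈ S with i k.castSucc = 1, w i = b k)
    (hb0 : ∀ k, 0 < b k) (hA : ∑ i ∈ S with i (Fin.last d) = -1, w i = A)
    (hB : ∑ i ∈ S with i (Fin.last d) = 1, w i = B) (hAB : A < B) :
    (fun n : ℕ => (∏ k, √(Real.pi * (n * (2 * b k / W)) / 2)) * (walkWeight (d + 1) S w n / W ^ n)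
        - (1 - A / B)) =O[atTop] fun n : ℕ => (n : ℝ)⁻¹ := by
  have key := mul_killedStep_pow_prod_survivalProb_sub_isBigO (S := S) (p := fun i => W⁻¹ * w i)
    (s := foldedStep) (v := AddMonoidHom.snd (Fin d → ℕ) ℤ) (P := fun k => 2 * b k / W)
    (c := fun k => (Pi.evalAddMonoidHom _ k).comp (AddMonoidHom.fst _ _)) (a := A / W) (b := B / W)
    (fun i hi => mul_nonneg (inv_nonneg.2 hW0.le) (hw i hi))
    (by rw [← mul_sum, hW, inv_mul_cancel₀ hW0.ne'])
    (fun k i hi => by rcases hstep i hi k.castSucc with h | h | h <;> simp [foldedStep, h])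
    (fun k => by
      rw [← hb, ← sum_mul_natAbs (fun i hi => hstep i hi _) (hsym k), sum_div]
      exact sum_congr rfl fun i _ => (mul_assoc _ _ _).trans (inv_mul_eq_div _ _))
    (fun k => div_pos (mul_pos two_pos (hb0 k)) hW0)
    (fun i hi => hstep i hi _)
    (by rw [← hA, ← mul_sum, inv_mul_eq_div]; rfl)
    (by rw [← hB, ← mul_sum, inv_mul_eq_div]; rfl)
    (by gcongr)
  refine key.congr_left fun n => ?_
  rw [walkWeight_eq_folded_killedStep_pow hstep hsym, killedStep_smul_weight, smul_pow,
    div_div_div_cancel_right₀ hW0.ne', LinearMap.smul_apply, Pi.smul_apply, smul_eq_mul, inv_pow,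
    inv_mul_eq_div]
  rfl

lemma exists_abs_sub_le_of_isBigO {s u Y : ℕ → ℝ} {q : ℝ} (hu : ∀ᶠ n in atTop, 0 < u n)
    (hY : ∀ᶠ n in atTop, 0 < Y n)
    (h : (fun n => Y n * (s n / u n) - q) =O[atTop] fun n : ℕ => (n : ℝ)⁻¹) :
    ∃ C, ∀ᶠ n : ℕ in atTop, |s n - u n * (Y n)⁻¹ * q| ≤ C * (u n * (Y n)⁻¹ / n) := by
  obtain ⟨C, hC⟩ := h.bound
  refine ⟨C, ?_⟩
  filter_upwards [hC, hu, hY] with n hn hun hYn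
  calc |s n - u n * (Y n)⁻¹ * q| = |u n * (Y n)⁻¹ * (Y n * (s n / u n) - q)| := by
        field_simp
    _ = u n * (Y n)⁻¹ * |Y n * (s n / u n) - q| := by rw [abs_mul, abs_of_pos (by positivity)]
    _ ≤ u n * (Y n)⁻¹ * (C * ‖(n : ℝ)⁻¹‖) := by gcongr; exact hn
    _ = C * (u n * (Y n)⁻¹ / n) := by
        rw [norm_inv, Real.norm_natCast]
        ring

end MostlySymmetric

theorem mostly_symmetric_positive_drift_asymptotics_general
    (d : ℕ) (S : Finset (Fin (d + 1) → ℤ)) (w : (Fin (d + 1) → ℤ) → ℝ)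
    (hstep : ∀ i ∈ S, ∀ j, i j = -1 ∨ i j = 0 ∨ i j = 1)
    (hw : ∀ i ∈ S, 0 ≤ w i)
    (hsym : ∀ k : Fin d, SymmetricAxis (d + 1) S w (Fin.castSucc k))
    (hb : ∀ k : Fin d, 0 < ∑ i ∈ S.filter fun i => i (Fin.castSucc k) = 1, w i)
    (hdrift : (∑ i ∈ S.filter fun i => i (Fin.last d) = -1, w i)
        < ∑ i ∈ S.filter fun i => i (Fin.last d) = 1, w i) :
    ∃ C : ℝ, ∀ᶠ n : ℕ in atTop,
      |walkWeight (d + 1) S w n -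
          (∑ i ∈ S, w i) ^ n * (n : ℝ) ^ (-(d : ℝ) / 2) *
            (((∑ i ∈ S, w i) / Real.pi) ^ ((d : ℝ) / 2) *
              ((∑ i ∈ S.filter fun i => i (Fin.last d) = 1, w i)
                  - ∑ i ∈ S.filter fun i => i (Fin.last d) = -1, w i) /
                ((∑ i ∈ S.filter fun i => i (Fin.last d) = 1, w i) *
                  Real.sqrt (∏ k : Fin d,
                    ∑ i ∈ S.filter fun i => i (Fin.castSucc k) = 1, w i)))|
        ≤ C * (∑ i ∈ S, w i) ^ n * (n : ℝ) ^ (-(d : ℝ) / 2) / n := by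
  set W := ∑ i ∈ S, w i with hW
  set A := ∑ i ∈ S with i (Fin.last d) = -1, w i with hA
  set B := ∑ i ∈ S with i (Fin.last d) = 1, w i with hB
  set b := fun k : Fin d => ∑ i ∈ S with i k.castSucc = 1, w i
  have hB0 : 0 < B := (sum_nonneg fun i hi => hw i (mem_filter.1 hi).1).trans_lt hdrift
  have hW0 : 0 < W := hB0.trans_le (sum_le_sum_of_subset_of_nonneg (filter_subset _ _)
    fun i hi _ => hw i hi)
  have hY : ∀ᶠ n : ℕ in atTop, 0 < ∏ k, √(Real.pi * (n * (2 * b k / W)) / 2) := by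
    filter_upwards [eventually_gt_atTop 0] with n hn
    exact prod_pos fun k _ => by have := hb k; positivity
  obtain ⟨C, hC⟩ := exists_abs_sub_le_of_isBigO (.of_forall fun n => pow_pos hW0 n) hY
    (mul_walkWeight_div_pow_sub_isBigO (b := b) hstep hw hsym hW.symm hW0 (fun _ => rfl) hb
      hA.symm hB.symm hdrift)
  refine ⟨C * ((W / Real.pi) ^ ((d : ℝ) / 2) / √(∏ k, b k)), hC.mono fun n hn => ?_⟩
  rw [inv_prod_sqrt_eq (b := b) n.cast_nonneg hW0.le fun k => (hb k).le, one_sub_div hB0.ne'] at hn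
  convert hn using 1
  · rw [mul_comm B, mul_div_mul_comm]
    ring_nf
  · ring

/-- Positive drift asymptotics (Melczer–Wilson) for a mostly symmetric step set in
dimension `d+1` (symmetric over the first `d` axes), with positive drift
`B(1) - A(1) > 0`:
`s_n = S(1)^n n^{-d/2} [ (S(1)/π)^{d/2} (B(1)-A(1))/(B(1) √(b_1⋯b_d)) + O(1/n) ]`. -/
theorem mostly_symmetric_positive_drift_asymptotics
    (d : ℕ) (S : Finset (Fin (d + 1) → ℤ)) (w : (Fin (d + 1) → ℤ) → ℝ)
    (hstep : ∀ i ∈ S, (∀ j, i j = -1 ∨ i j = 0 ∨ i j = 1) ∧ i ≠ 0)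
    (hw : ∀ i ∈ S, 0 < w i)
    (hsym : ∀ k : Fin d, SymmetricAxis (d + 1) S w (Fin.castSucc k))
    (hfwd : ∀ k : Fin (d + 1), ∃ i ∈ S, i k = 1)
    (hbwd : ∀ k : Fin (d + 1), ∃ i ∈ S, i k = -1)
    (hdrift : (∑ i ∈ S.filter fun i => i (Fin.last d) = -1, w i)
        < ∑ i ∈ S.filter fun i => i (Fin.last d) = 1, w i) :
    ∃ C : ℝ, ∀ᶠ n : ℕ in atTop,
      |walkWeight (d + 1) S w n -
          (∑ i ∈ S, w i) ^ n * (n : ℝ) ^ (-(d : ℝ) / 2) *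
            (((∑ i ∈ S, w i) / Real.pi) ^ ((d : ℝ) / 2) *
              ((∑ i ∈ S.filter fun i => i (Fin.last d) = 1, w i)
                  - ∑ i ∈ S.filter fun i => i (Fin.last d) = -1, w i) /
                ((∑ i ∈ S.filter fun i => i (Fin.last d) = 1, w i) *
                  Real.sqrt (∏ k : Fin d,
                    ∑ i ∈ S.filter fun i => i (Fin.castSucc k) = 1, w i)))|
        ≤ C * (∑ i ∈ S, w i) ^ n * (n : ℝ) ^ (-(d : ℝ) / 2) / n := by
  exact mostly_symmetric_positive_drift_asymptotics_general d S w (fun i hi => (hstep i hi).1)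
    (fun i hi => (hw i hi).le) hsym (fun k => sum_pos (fun i hi => hw i (mem_filter.1 hi).1)
      ((hfwd k.castSucc).imp fun i hi => mem_filter.2 hi)) hdrift

end
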